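/- Smoothing bound for the max-relative entropy: Let ρ, σ be states on ℂ^d, let λ ∈ ℝ with λ ≤ D_max(ρ‖σ), and set ε := Tr[(ρ − 2^λ σ)₊]. Then D_max^{√ε}(ρ‖σ) ≤ λ − log(1 − ε) in the extended reals. -/

import Mathlib

open scoped Kronecker ComplexOrder

noncomputable section

namespace QCD

attribute [local instance] Classical.propDecidable

variable {n m : Type} [Fintype n] [DecidableEq n] [Fintype m] [DecidableEq m]

/-- The real part of the trace of a complex matrix. -/
def rtr (A : Matrix n n ℂ) : ℝ := (A.trace).re

/-- A quantum state: positive semidefinite with trace one. -/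
def IsState (ρ : Matrix n n ℂ) : Prop := ρ.PosSemidef ∧ ρ.trace = 1

/-- Loewner order: `A ≤ B` iff `B - A` is positive semidefinite. -/
def loewnerLE (A B : Matrix n n ℂ) : Prop := (B - A).PosSemidef

/-- Support containment (for PSD matrices): `ker σ ⊆ ker ρ`. -/
def SuppLE (ρ σ : Matrix n n ℂ) : Prop := ∀ v : n → ℂ, σ.mulVec v = 0 → ρ.mulVec v = 0

/-- Functional calculus for Hermitian matrices (junk value `0` otherwise). -/
def matFun (f : ℝ → ℝ) (A : Matrix n n ℂ) : Matrix n n ℂ :=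
  if hA : A.IsHermitian then
    (hA.eigenvectorUnitary : Matrix n n ℂ) *
      Matrix.diagonal (fun i => (f (hA.eigenvalues i) : ℂ)) *
      (star (hA.eigenvectorUnitary : Matrix n n ℂ))
  else 0

/-- Matrix square root via functional calculus. -/
def msqrt (A : Matrix n n ℂ) : Matrix n n ℂ := matFun Real.sqrt A

/-- Matrix real power taken on the support (`0 ^ t := 0`). -/
def mpow (A : Matrix n n ℂ) (t : ℝ) : Matrix n n ℂ :=
  matFun (fun x => if x = 0 then 0 else x ^ t) A

/-- Matrix base-2 logarithm on the support. -/
def mlog (A : Matrix n n ℂ) : Matrix n n ℂ := matFun (Real.logb 2) A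

/-- Positive part of a Hermitian matrix. -/
def mposPart (A : Matrix n n ℂ) : Matrix n n ℂ := matFun (fun x => max x 0) A

/-- Trace norm. -/
def traceNorm (A : Matrix n m ℂ) : ℝ := rtr (msqrt (A.conjTranspose * A))

/-- Base-2 logarithm as an extended real (`⊥` on nonpositive input). -/
def elog (x : ℝ) : EReal := if x ≤ 0 then ⊥ else ((Real.logb 2 x : ℝ) : EReal)

/-- Base-2 logarithm of an extended real. -/
def elogE (x : EReal) : EReal := if x = ⊤ then ⊤ else elog x.toReal

/-- `2 ^ x` for an extended real `x`. -/
def epow2 (x : EReal) : EReal :=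
  if x = ⊤ then ⊤ else if x = ⊥ then 0 else ((((2:ℝ) ^ x.toReal : ℝ)) : EReal)

/-- Umegaki relative entropy (base 2), `⊤` if the support condition fails. -/
def relEntropy (ρ σ : Matrix n n ℂ) : EReal :=
  if SuppLE ρ σ then ((rtr (ρ * (mlog ρ - mlog σ)) : ℝ) : EReal) else ⊤

/-- Petz–Rényi divergence (base 2). -/
def petzRenyi (α : ℝ) (ρ σ : Matrix n n ℂ) : EReal :=
  if 1 < α ∧ ¬ SuppLE ρ σ then ⊤
  else (((α - 1)⁻¹ : ℝ) : EReal) * elog (rtr (mpow ρ α * mpow σ (1 - α)))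

/-- Geometric (maximal) Rényi divergence (base 2). -/
def geomRenyi (α : ℝ) (ρ σ : Matrix n n ℂ) : EReal :=
  if SuppLE ρ σ then
    (((α - 1)⁻¹ : ℝ) : EReal) *
      elog (rtr (σ * mpow (mpow σ (-(1/2 : ℝ)) * ρ * mpow σ (-(1/2 : ℝ))) α))
  else ⊤

/-- Max-relative entropy (base 2). -/
def dMax (ρ σ : Matrix n n ℂ) : EReal :=
  sInf {x : EReal | ∃ lam : ℝ, x = (lam : EReal) ∧ loewnerLE ρ ((((2:ℝ) ^ lam : ℝ) : ℂ) • σ)}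

/-- Uhlmann fidelity. -/
def fidelity (ρ σ : Matrix n n ℂ) : ℝ := (rtr (msqrt (msqrt σ * ρ * msqrt σ))) ^ 2

/-- Sine (purified) distance. -/
def sineDist (ρ σ : Matrix n n ℂ) : ℝ := Real.sqrt (1 - fidelity ρ σ)

/-- Smoothed max-relative entropy: smoothing over states in the sine-distance ball. -/
def dMaxSmooth (δ : ℝ) (ρ σ : Matrix n n ℂ) : EReal :=
  ⨅ (ρ' : Matrix n n ℂ) (_ : IsState ρ' ∧ sineDist ρ ρ' ≤ δ), dMax ρ' σ

/-- Hypothesis testing divergence (base 2). -/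
def dH (ε : ℝ) (ρ σ : Matrix n n ℂ) : EReal :=
  - elog (sInf {x : ℝ | ∃ T : Matrix n n ℂ,
      T.PosSemidef ∧ ((1 : Matrix n n ℂ) - T).PosSemidef ∧ 1 - ε ≤ rtr (T * ρ) ∧ x = rtr (T * σ)})

/-- The quantity `c_γ(ρ‖σ)`. -/
def cGamma (γ : ℝ) (ρ σ : Matrix n n ℂ) : EReal :=
  ((γ⁻¹ : ℝ) : EReal) *
    elogE (epow2 ((γ : ℝ) * petzRenyi (1 + γ) ρ σ) +
           epow2 (((-γ : ℝ) : EReal) * petzRenyi (1 - γ) ρ σ) + 1)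

/-- Binary entropy (base 2). -/
def binEnt (x : ℝ) : ℝ := -(x * Real.logb 2 x) - (1 - x) * Real.logb 2 (1 - x)

/-- Action of `id_k ⊗ Φ` on block matrices. -/
def blockApply {k : Type} (Φ : Matrix n n ℂ →ₗ[ℂ] Matrix m m ℂ)
    (M : Matrix (k × n) (k × n) ℂ) : Matrix (k × m) (k × m) ℂ :=
  Matrix.of fun p q => Φ (Matrix.of fun a b => M (p.1, a) (q.1, b)) p.2 q.2

/-- Action of `Φ ⊗ id_k` on block matrices. -/
def blockApplyRight {k : Type} (Φ : Matrix n n ℂ →ₗ[ℂ] Matrix m m ℂ)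
    (M : Matrix (n × k) (n × k) ℂ) : Matrix (m × k) (m × k) ℂ :=
  Matrix.of fun p q => Φ (Matrix.of fun a b => M (a, p.2) (b, q.2)) p.1 q.1

/-- Quantum channel: trace preserving and completely positive. -/
def IsQChannel (Φ : Matrix n n ℂ →ₗ[ℂ] Matrix m m ℂ) : Prop :=
  (∀ M : Matrix n n ℂ, (Φ M).trace = M.trace) ∧
  (∀ k : ℕ, 1 ≤ k → ∀ M : Matrix (Fin k × n) (Fin k × n) ℂ, M.PosSemidef →
    (blockApply Φ M).PosSemidef)

/-- `id_k ⊗ Φ` as a linear map. -/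
def blockApplyL (k : Type) (Φ : Matrix n n ℂ →ₗ[ℂ] Matrix m m ℂ) :
    Matrix (k × n) (k × n) ℂ →ₗ[ℂ] Matrix (k × m) (k × m) ℂ where
  toFun := blockApply Φ
  map_add' M N := by
    ext p q
    show Φ (Matrix.of fun a b => (M + N) (p.1, a) (q.1, b)) p.2 q.2 = _
    have h : (Matrix.of fun a b => (M + N) (p.1, a) (q.1, b)) =
        (Matrix.of fun a b => M (p.1, a) (q.1, b)) +
          (Matrix.of fun a b => N (p.1, a) (q.1, b)) := rfl
    rw [h, map_add]
    rfl
  map_smul' c M := by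
    ext p q
    show Φ (Matrix.of fun a b => (c • M) (p.1, a) (q.1, b)) p.2 q.2 = _
    have h : (Matrix.of fun a b => (c • M) (p.1, a) (q.1, b)) =
        c • (Matrix.of fun a b => M (p.1, a) (q.1, b)) := rfl
    rw [h, map_smul]
    rfl

/-- `Φ ⊗ id_k` as a linear map. -/
def blockApplyRightL (k : Type) (Φ : Matrix n n ℂ →ₗ[ℂ] Matrix m m ℂ) :
    Matrix (n × k) (n × k) ℂ →ₗ[ℂ] Matrix (m × k) (m × k) ℂ where
  toFun := blockApplyRight Φ
  map_add' M N := by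
    ext p q
    show Φ (Matrix.of fun a b => (M + N) (a, p.2) (b, q.2)) p.1 q.1 = _
    have h : (Matrix.of fun a b => (M + N) (a, p.2) (b, q.2)) =
        (Matrix.of fun a b => M (a, p.2) (b, q.2)) +
          (Matrix.of fun a b => N (a, p.2) (b, q.2)) := rfl
    rw [h, map_add]
    rfl
  map_smul' c M := by
    ext p q
    show Φ (Matrix.of fun a b => (c • M) (a, p.2) (b, q.2)) p.1 q.1 = _
    have h : (Matrix.of fun a b => (c • M) (a, p.2) (b, q.2)) =
        c • (Matrix.of fun a b => M (a, p.2) (b, q.2)) := rfl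
    rw [h, map_smul]
    rfl

/-- Tensor product of two channels (Kronecker product action). -/
def tensorChannel {n₁ m₁ n₂ m₂ : Type}
    (E₁ : Matrix n₁ n₁ ℂ →ₗ[ℂ] Matrix m₁ m₁ ℂ) (E₂ : Matrix n₂ n₂ ℂ →ₗ[ℂ] Matrix m₂ m₂ ℂ) :
    Matrix (n₁ × n₂) (n₁ × n₂) ℂ →ₗ[ℂ] Matrix (m₁ × m₂) (m₁ × m₂) ℂ :=
  (blockApplyRightL m₂ E₁).comp (blockApplyL n₁ E₂)

/-- Index type for `k`-fold tensor powers. -/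
def tpow (ι : Type) : ℕ → Type
  | 0 => PUnit
  | (k+1) => tpow ι k × ι

def tpowFintype (ι : Type) [Fintype ι] : ∀ k : ℕ, Fintype (tpow ι k)
  | 0 => inferInstanceAs (Fintype PUnit)
  | (k+1) => letI := tpowFintype ι k; inferInstanceAs (Fintype (tpow ι k × ι))

instance (ι : Type) [Fintype ι] (k : ℕ) : Fintype (tpow ι k) := tpowFintype ι k

def tpowDecEq (ι : Type) [DecidableEq ι] : ∀ k : ℕ, DecidableEq (tpow ι k)
  | 0 => inferInstanceAs (DecidableEq PUnit)
  | (k+1) => letI := tpowDecEq ι k; inferInstanceAs (DecidableEq (tpow ι k × ι))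

instance (ι : Type) [DecidableEq ι] (k : ℕ) : DecidableEq (tpow ι k) := tpowDecEq ι k

/-- `k`-fold Kronecker tensor power of a matrix. -/
def tpowMat (ρ : Matrix n n ℂ) : ∀ k : ℕ, Matrix (tpow n k) (tpow n k) ℂ
  | 0 => 1
  | (k+1) => (tpowMat ρ k) ⊗ₖ ρ

/-- `k`-fold tensor power of a channel. -/
def tpowChannel (Φ : Matrix n n ℂ →ₗ[ℂ] Matrix m m ℂ) :
    ∀ k : ℕ, Matrix (tpow n k) (tpow n k) ℂ →ₗ[ℂ] Matrix (tpow m k) (tpow m k) ℂ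
  | 0 => LinearMap.id
  | (k+1) => tensorChannel (tpowChannel Φ k) Φ

/-- Channel divergence induced by a divergence `𝔇` on states:
sup over `k ≥ 1` and input states `ν` on `ℂ^k ⊗ ℂ^d`. -/
def chDiv (𝔇 : ∀ (p : Type) [Fintype p] [DecidableEq p], Matrix p p ℂ → Matrix p p ℂ → EReal)
    (E F : Matrix n n ℂ →ₗ[ℂ] Matrix m m ℂ) : EReal :=
  ⨆ (k : ℕ) (_ : 1 ≤ k) (ν : Matrix (Fin k × n) (Fin k × n) ℂ) (_ : IsState ν),
    𝔇 (Fin k × m) (blockApply E ν) (blockApply F ν)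

/-- The geometric Rényi divergence as a divergence family. -/
def geomD (α : ℝ) : ∀ (p : Type) [Fintype p] [DecidableEq p],
    Matrix p p ℂ → Matrix p p ℂ → EReal :=
  fun _ _ _ => geomRenyi α

/-- The Umegaki relative entropy as a divergence family. -/
def relD : ∀ (p : Type) [Fintype p] [DecidableEq p],
    Matrix p p ℂ → Matrix p p ℂ → EReal :=
  fun _ _ _ => relEntropy

/-- The hypothesis testing divergence as a divergence family. -/
def dHD (ε : ℝ) : ∀ (p : Type) [Fintype p] [DecidableEq p],
    Matrix p p ℂ → Matrix p p ℂ → EReal :=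
  fun _ _ _ => dH ε

/-- Regularized channel relative entropy. -/
def regRelEntropy (E F : Matrix n n ℂ →ₗ[ℂ] Matrix m m ℂ) : EReal :=
  ⨆ (k : ℕ) (_ : 1 ≤ k),
    (((k : ℝ)⁻¹ : ℝ) : EReal) * chDiv relD (tpowChannel E k) (tpowChannel F k)

end QCD

/-!
Write `A` for the positive part of `ρ - 2 ^ λ σ`, so that `ρ ≤ T` with `T := 2 ^ λ σ + A`. The
geometric mean `G` of `T⁻¹` and `2 ^ λ σ` satisfies `0 ≤ G ≤ 1` and `G T G = 2 ^ λ σ`. Smooth `ρ` to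
the state `ρ' := p⁻¹ G ρ G`, where `p := Tr (G ρ G)`. Conjugating `ρ ≤ T` by `G` gives
`p ρ' ≤ 2 ^ λ σ`, and `p ≥ 1 - Tr A` because conjugation by `G` decreases the trace of `T - ρ`.
Since `G ≥ 0`, the matrix `√ρ G √ρ` is the positive square root of `√ρ (G ρ G) √ρ`, hence the
fidelity of `ρ` and `ρ'` is `p⁻¹ (Tr ρ G)²`, which is at least `p` because `G² ≤ G`.
-/

namespace QCD

open scoped MatrixOrder Ring

section CStarAlgebra

variable {A : Type*} [CStarAlgebra A] [PartialOrder A] [StarOrderedRing A]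

-- The witness is the geometric mean of `b⁻¹` and `a`.
lemma exists_mul_mul_self_eq_of_isStrictlyPositive {a b : A} (hb : IsStrictlyPositive b)
    (ha : 0 ≤ a) (hab : a ≤ b) : ∃ g ∈ Set.Icc (0 : A) 1, g * b * g = a := by
  set m := CFC.sqrt (CFC.conjSqrt b a)
  set r := CFC.sqrt b⁻¹ʳ
  have hmm : m * m = CFC.conjSqrt b a := by
    refine CFC.sqrt_mul_sqrt_self _ ?_
    simpa only [map_zero] using CFC.conjSqrt_monotone (c := b) ha
  have hbb : b * b = CFC.conjSqrt b b := by
    have hsqrt := CFC.sqrt_mul_sqrt_self b hb.nonneg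
    calc b * b = (CFC.sqrt b * CFC.sqrt b) * (CFC.sqrt b * CFC.sqrt b) := by rw [hsqrt]
      _ = CFC.sqrt b * (CFC.sqrt b * CFC.sqrt b) * CFC.sqrt b := by simp only [mul_assoc]
      _ = CFC.conjSqrt b b := by rw [hsqrt, CFC.conjSqrt_apply]
  have hmb : m ≤ b := calc
    m ≤ CFC.sqrt (CFC.conjSqrt b b) := CFC.sqrt_le_sqrt _ _ (CFC.conjSqrt_monotone hab)
    _ = b := CFC.sqrt_unique hbb hb.nonneg
  have hrbr : r * b * r = 1 := CFC.conjSqrt_ringInverse_self b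
  refine ⟨r * m * r, ⟨?_, ?_⟩, ?_⟩
  · exact (CFC.sqrt_nonneg _).isSelfAdjoint.conjugate_nonneg (CFC.sqrt_nonneg _)
  · exact (CFC.conjSqrt_monotone (c := b⁻¹ʳ) hmb).trans_eq hrbr
  · calc r * m * r * b * (r * m * r) = r * m * (r * b * r) * m * r := by simp only [mul_assoc]
      _ = CFC.conjSqrt b⁻¹ʳ (m * m) := by
        rw [hrbr, mul_one, CFC.conjSqrt_apply, mul_assoc r m m]
      _ = a := by rw [hmm, CFC.conjSqrt_ringInverse_conjSqrt b a]

lemma mul_self_le_self {g : A} (hg : g ∈ Set.Icc 0 1) : g * g ≤ g := by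
  simpa only [pow_one, sq] using CStarAlgebra.pow_antitone hg.1 hg.2 one_le_two

lemma isCompact_Icc_zero_one [FiniteDimensional ℂ A] : IsCompact (Set.Icc (0 : A) 1) := by
  have : ProperSpace A := FiniteDimensional.proper ℂ A
  refine (isCompact_closedBall (0 : A) 1).of_isClosed_subset isClosed_Icc fun x hx => ?_
  exact mem_closedBall_zero_iff.mpr (CStarAlgebra.mem_Icc_iff_norm_le_one.mp hx).2

-- `b` may be singular: perturb it to `b + 1 / (k + 1)` and take a limit point of the solutions.
lemma exists_mul_mul_self_eq [FiniteDimensional ℂ A] {a b : A} (ha : 0 ≤ a) (hab : a ≤ b) :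
    ∃ g ∈ Set.Icc (0 : A) 1, g * b * g = a := by
  have perturbed (k : ℕ) :
      ∃ g ∈ Set.Icc (0 : A) 1, g * (b + algebraMap ℝ A (1 / (k + 1))) * g = a := by
    have hk : IsStrictlyPositive (algebraMap ℝ A (1 / (k + 1))) :=
      isStrictlyPositive_algebraMap Nat.one_div_pos_of_nat
    exact exists_mul_mul_self_eq_of_isStrictlyPositive (hk.nonneg_add (ha.trans hab)) ha
      (hab.trans (le_add_of_nonneg_right hk.nonneg))
  choose g hg hga using perturbed
  obtain ⟨x, hx, φ, hφ, hgx⟩ := isCompact_Icc_zero_one.tendsto_subseq hg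
  have hb : Filter.Tendsto (fun k : ℕ => b + algebraMap ℝ A (1 / (k + 1))) .atTop (nhds b) := by
    simpa only [map_zero, add_zero, Function.comp_def] using
      (((continuous_algebraMap ℝ A).tendsto 0).comp
        tendsto_one_div_add_atTop_nhds_zero_nat).const_add b
  refine ⟨x, hx, ?_⟩
  refine tendsto_nhds_unique ((hgx.mul (hb.comp hφ.tendsto_atTop)).mul hgx) ?_
  exact tendsto_const_nhds.congr fun k => (hga (φ k)).symm

end CStarAlgebra

section Trace

variable {n m : Type} [Fintype n] [Fintype m] {A ρ : Matrix n n ℂ}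

lemma rtr_add (A B : Matrix n n ℂ) : rtr (A + B) = rtr A + rtr B := by
  rw [rtr, Matrix.trace_add, Complex.add_re, rtr, rtr]

lemma rtr_sub (A B : Matrix n n ℂ) : rtr (A - B) = rtr A - rtr B := by
  rw [rtr, Matrix.trace_sub, Complex.sub_re, rtr, rtr]

lemma rtr_smul (c : ℝ) (A : Matrix n n ℂ) : rtr (c • A) = c * rtr A := by
  rw [rtr, Matrix.trace_smul, Complex.smul_re, smul_eq_mul, rtr]

lemma rtr_mul_comm (A : Matrix n m ℂ) (B : Matrix m n ℂ) : rtr (A * B) = rtr (B * A) := by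
  rw [rtr, Matrix.trace_mul_comm, rtr]

lemma trace_eq_rtr (hA : 0 ≤ A) : A.trace = rtr A :=
  Complex.ext rfl (Complex.nonneg_iff.mp (Matrix.nonneg_iff_posSemidef.mp hA).trace_nonneg).2.symm

lemma IsState.nonneg (hρ : IsState ρ) : 0 ≤ ρ :=
  hρ.1.nonneg

lemma IsState.rtr_eq_one (hρ : IsState ρ) : rtr ρ = 1 := by
  rw [rtr, hρ.2, Complex.one_re]

lemma isState_inv_rtr_smul (hA : 0 ≤ A) (hpos : 0 < rtr A) : IsState ((rtr A)⁻¹ • A) := by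
  refine ⟨(Matrix.nonneg_iff_posSemidef.mp hA).smul (inv_nonneg.mpr hpos.le), ?_⟩
  rw [Matrix.trace_smul, trace_eq_rtr hA, Complex.real_smul, ← Complex.ofReal_mul,
    inv_mul_cancel₀ hpos.ne', Complex.ofReal_one]

end Trace

section FunctionalCalculus

variable {n : Type} [Fintype n] [DecidableEq n] {A : Matrix n n ℂ}

lemma matFun_eq_cfc (hA : A.IsHermitian) (f : ℝ → ℝ) : matFun f A = cfc f A := by
  rw [matFun, dif_pos hA, hA.cfc_eq, Matrix.IsHermitian.cfc, Unitary.conjStarAlgAut_apply]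
  rfl

lemma msqrt_eq_sqrt (hA : 0 ≤ A) : msqrt A = CFC.sqrt A := by
  rw [msqrt, matFun_eq_cfc hA.isSelfAdjoint, CFC.sqrt_eq_real_sqrt A, cfcₙ_eq_cfc]

lemma mposPart_eq_posPart (hA : A.IsHermitian) : mposPart A = A⁺ := by
  rw [mposPart, matFun_eq_cfc hA, CFC.posPart_def, cfcₙ_eq_cfc]
  rfl

lemma msqrt_nonneg (hA : 0 ≤ A) : 0 ≤ msqrt A :=
  msqrt_eq_sqrt hA ▸ CFC.sqrt_nonneg A

lemma conjTranspose_msqrt (hA : 0 ≤ A) : (msqrt A).conjTranspose = msqrt A :=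
  (msqrt_nonneg hA).isSelfAdjoint

lemma msqrt_mul_msqrt (hA : 0 ≤ A) : msqrt A * msqrt A = A := by
  rw [msqrt_eq_sqrt hA, CFC.sqrt_mul_sqrt_self A]

lemma msqrt_mul_self (hA : 0 ≤ A) : msqrt (A * A) = A := by
  rw [msqrt_eq_sqrt hA.isSelfAdjoint.mul_self_nonneg, CFC.sqrt_mul_self A]

lemma msqrt_smul (hA : 0 ≤ A) {c : ℝ} (hc : 0 ≤ c) : msqrt (c • A) = √c • msqrt A := by
  rw [msqrt_eq_sqrt (smul_nonneg hc hA), msqrt_eq_sqrt hA]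
  refine CFC.sqrt_unique ?_ (smul_nonneg (Real.sqrt_nonneg c) (CFC.sqrt_nonneg A))
  rw [smul_mul_smul_comm, Real.mul_self_sqrt hc, CFC.sqrt_mul_sqrt_self A]

end FunctionalCalculus

section TraceInequalities

variable {n : Type} [Fintype n] {A B G X : Matrix n n ℂ}

lemma rtr_mul_nonneg (hA : 0 ≤ A) (hB : 0 ≤ B) : 0 ≤ rtr (A * B) := by
  classical
  have hconj : 0 ≤ msqrt A * B * msqrt A :=
    (msqrt_nonneg hA).isSelfAdjoint.conjugate_nonneg hB
  calc 0 ≤ rtr (msqrt A * B * msqrt A) :=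
        (Complex.nonneg_iff.mp (Matrix.nonneg_iff_posSemidef.mp hconj).trace_nonneg).1
    _ = rtr (A * B) := by rw [rtr_mul_comm, ← mul_assoc, msqrt_mul_msqrt hA]

lemma rtr_mul_le_rtr_mul (hX : 0 ≤ X) (hAB : A ≤ B) : rtr (X * A) ≤ rtr (X * B) := by
  rw [← sub_nonneg, ← rtr_sub, ← mul_sub]
  exact rtr_mul_nonneg hX (sub_nonneg.mpr hAB)

variable [DecidableEq n]

open scoped Matrix.Norms.L2Operator in
lemma rtr_conj_le_rtr_mul (hX : 0 ≤ X) (hG : G ∈ Set.Icc 0 1) :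
    rtr (G * X * G) ≤ rtr (X * G) := by
  rw [mul_assoc, rtr_mul_comm, mul_assoc]
  exact rtr_mul_le_rtr_mul hX (mul_self_le_self hG)

lemma rtr_conj_le (hX : 0 ≤ X) (hG : G ∈ Set.Icc 0 1) : rtr (G * X * G) ≤ rtr X := by
  simpa only [mul_one] using (rtr_conj_le_rtr_mul hX hG).trans (rtr_mul_le_rtr_mul hX hG.2)

end TraceInequalities

section Fidelity

variable {n m : Type} [Fintype n] [DecidableEq n] [Fintype m] [DecidableEq m]
  {ρ σ G : Matrix n n ℂ}

lemma rtr_matFun {A : Matrix n n ℂ} (hA : A.IsHermitian) (f : ℝ → ℝ) :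
    rtr (matFun f A) = (A.charpoly.roots.map fun z => f z.re).sum := by
  rw [matFun, dif_pos hA, rtr, Matrix.trace_mul_comm, ← mul_assoc, Unitary.coe_star_mul_self,
    one_mul, Matrix.trace_diagonal, hA.roots_charpoly_eq_eigenvalues]
  simp [Multiset.map_map]

-- `A * Aᴴ` and `Aᴴ * A` have the same eigenvalues up to zeros.
open Polynomial in
lemma traceNorm_conjTranspose (A : Matrix n m ℂ) : traceNorm A.conjTranspose = traceNorm A := by
  have hroots := congrArg (fun p => (p.roots.map fun z => √z.re).sum)
    (Matrix.charpoly_mul_comm' A A.conjTranspose)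
  rw [traceNorm, traceNorm, msqrt, msqrt, Matrix.conjTranspose_conjTranspose,
    rtr_matFun (Matrix.isHermitian_mul_conjTranspose_self A),
    rtr_matFun (Matrix.isHermitian_conjTranspose_mul_self A)]
  have hne {k : Type} [Fintype k] [DecidableEq k] (p : ℕ) (B : Matrix k k ℂ) :
      X ^ p * B.charpoly ≠ 0 := mul_ne_zero (pow_ne_zero p X_ne_zero) B.charpoly_monic.ne_zero
  simpa [roots_mul (hne _ _), Multiset.map_nsmul, Multiset.sum_nsmul] using hroots

lemma fidelity_eq_traceNorm_sq (hρ : 0 ≤ ρ) (hσ : 0 ≤ σ) :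
    fidelity ρ σ = traceNorm (msqrt ρ * msqrt σ) ^ 2 := by
  rw [fidelity, traceNorm, Matrix.conjTranspose_mul, conjTranspose_msqrt hρ,
    conjTranspose_msqrt hσ, ← mul_assoc, mul_assoc (msqrt σ) (msqrt ρ), msqrt_mul_msqrt hρ]

lemma fidelity_comm (hρ : 0 ≤ ρ) (hσ : 0 ≤ σ) : fidelity ρ σ = fidelity σ ρ := by
  rw [fidelity_eq_traceNorm_sq hρ hσ, fidelity_eq_traceNorm_sq hσ hρ, ← traceNorm_conjTranspose,
    Matrix.conjTranspose_mul, conjTranspose_msqrt hρ, conjTranspose_msqrt hσ]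

lemma fidelity_smul_left (hρ : 0 ≤ ρ) (hσ : 0 ≤ σ) {c : ℝ} (hc : 0 ≤ c) :
    fidelity (c • ρ) σ = c * fidelity ρ σ := by
  have hconj : 0 ≤ msqrt σ * ρ * msqrt σ :=
    (msqrt_nonneg hσ).isSelfAdjoint.conjugate_nonneg hρ
  rw [fidelity, mul_smul_comm, smul_mul_assoc, msqrt_smul hconj hc, rtr_smul, mul_pow,
    Real.sq_sqrt hc, fidelity]

lemma fidelity_conj_left (hρ : 0 ≤ ρ) (hG : 0 ≤ G) :
    fidelity (G * ρ * G) ρ = rtr (ρ * G) ^ 2 := by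
  have hroot : 0 ≤ msqrt ρ * G * msqrt ρ :=
    (msqrt_nonneg hρ).isSelfAdjoint.conjugate_nonneg hG
  have hsq : msqrt ρ * (G * ρ * G) * msqrt ρ
      = (msqrt ρ * G * msqrt ρ) * (msqrt ρ * G * msqrt ρ) := calc
    _ = msqrt ρ * (G * (msqrt ρ * msqrt ρ) * G) * msqrt ρ := by rw [msqrt_mul_msqrt hρ]
    _ = _ := by simp only [mul_assoc]
  rw [fidelity, hsq, msqrt_mul_self hroot, rtr_mul_comm, ← mul_assoc, msqrt_mul_msqrt hρ]

lemma sineDist_le_sqrt {ε : ℝ} (h : 1 - ε ≤ fidelity ρ σ) : sineDist ρ σ ≤ √ε :=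
  Real.sqrt_le_sqrt (sub_le_comm.mp h)

end Fidelity

section MaxRelativeEntropy

variable {n : Type} {ρ σ : Matrix n n ℂ}

lemma dMax_le_of_le_smul {lam : ℝ} (h : ρ ≤ ((2 : ℝ) ^ lam) • σ) : dMax ρ σ ≤ lam :=
  sInf_le ⟨lam, rfl, by simpa only [loewnerLE, Complex.coe_smul] using Matrix.le_iff.mp h⟩

lemma dMax_le_of_smul_le {c lam : ℝ} (hc : 0 < c) (h : c • ρ ≤ ((2 : ℝ) ^ lam) • σ) :
    dMax ρ σ ≤ lam - elog c := by
  rw [elog, if_neg hc.not_ge, ← EReal.coe_sub]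
  refine dMax_le_of_le_smul ?_
  rw [Real.rpow_sub two_pos, Real.rpow_logb two_pos (by norm_num) hc, div_eq_inv_mul, mul_smul]
  have hinv := (Matrix.le_iff.mp h).smul (inv_nonneg.mpr hc.le)
  rwa [smul_sub, inv_smul_smul₀ hc.ne', ← Matrix.le_iff] at hinv

end MaxRelativeEntropy

section Smoothing

variable {n : Type} [Fintype n] [DecidableEq n] {ρ σ A B : Matrix n n ℂ}

lemma rtr_conj_le_fidelity (hρ : 0 ≤ ρ) {G : Matrix n n ℂ} (hG : G ∈ Set.Icc 0 1)
    (hpos : 0 < rtr (G * ρ * G)) :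
    rtr (G * ρ * G) ≤ fidelity ρ ((rtr (G * ρ * G))⁻¹ • (G * ρ * G)) := by
  have hGρG : 0 ≤ G * ρ * G := hG.1.isSelfAdjoint.conjugate_nonneg hρ
  have hinv : 0 ≤ (rtr (G * ρ * G))⁻¹ := inv_nonneg.mpr hpos.le
  rw [fidelity_comm hρ (smul_nonneg hinv hGρG), fidelity_smul_left hGρG hρ hinv,
    fidelity_conj_left hρ hG.1, le_inv_mul_iff₀ hpos, ← sq]
  exact pow_le_pow_left₀ hpos.le (rtr_conj_le_rtr_mul hρ hG) 2

open scoped Matrix.Norms.L2Operator in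
lemma exists_isState_smul_le (hρ : IsState ρ) (hB : 0 ≤ B) (hA : 0 ≤ A) (hρBA : ρ ≤ B + A)
    (hA1 : rtr A < 1) :
    ∃ ρ', IsState ρ' ∧ 1 - rtr A ≤ fidelity ρ ρ' ∧ (1 - rtr A) • ρ' ≤ B := by
  obtain ⟨G, hG, hGB⟩ := exists_mul_mul_self_eq hB (le_add_of_nonneg_right hA)
  have hGρG : 0 ≤ G * ρ * G := hG.1.isSelfAdjoint.conjugate_nonneg hρ.nonneg
  have hp : 1 - rtr A ≤ rtr (G * ρ * G) := by
    have hgap := rtr_conj_le (sub_nonneg.mpr hρBA) hG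
    rw [mul_sub, sub_mul, hGB, rtr_sub, rtr_sub, rtr_add, hρ.rtr_eq_one] at hgap
    linarith
  have hpos : 0 < rtr (G * ρ * G) := (sub_pos.mpr hA1).trans_le hp
  have hstate := isState_inv_rtr_smul hGρG hpos
  refine ⟨_, hstate, hp.trans (rtr_conj_le_fidelity hρ.nonneg hG hpos), ?_⟩
  calc (1 - rtr A) • (rtr (G * ρ * G))⁻¹ • (G * ρ * G)
      ≤ rtr (G * ρ * G) • (rtr (G * ρ * G))⁻¹ • (G * ρ * G) :=
        smul_le_smul_of_nonneg_right hp hstate.nonneg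
    _ = G * ρ * G := smul_inv_smul₀ hpos.ne' _
    _ ≤ G * (B + A) * G := hG.1.isSelfAdjoint.conjugate_le_conjugate hρBA
    _ = B := hGB

theorem dMaxSmooth_smoothing_bound_general (hρ : IsState ρ) (hσ : σ.PosSemidef) (lam ε : ℝ)
    (hε : ε = rtr (mposPart (ρ - (((2 : ℝ) ^ lam : ℝ) : ℂ) • σ))) :
    dMaxSmooth √ε ρ σ ≤ lam - elog (1 - ε) := by
  rcases le_or_gt (1 - ε) 0 with hε1 | hε1
  · rw [elog, if_pos hε1]
    exact le_top
  rw [Complex.coe_smul] at hε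
  set B := ((2 : ℝ) ^ lam) • σ
  have hB : 0 ≤ B := smul_nonneg (Real.rpow_nonneg zero_le_two lam) hσ.nonneg
  have hρB : (ρ - B).IsHermitian := hρ.nonneg.isSelfAdjoint.sub hB.isSelfAdjoint
  rw [mposPart_eq_posPart hρB] at hε
  have hle : ρ ≤ B + (ρ - B)⁺ := sub_le_iff_le_add'.mp (CFC.le_posPart hρB)
  obtain ⟨ρ', hρ', hfid, hρ'B⟩ :=
    exists_isState_smul_le hρ hB (CFC.posPart_nonneg _) hle (hε ▸ sub_pos.mp hε1)
  rw [← hε] at hfid hρ'B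
  exact (iInf₂_le ρ' ⟨hρ', sineDist_le_sqrt hfid⟩).trans (dMax_le_of_smul_le hε1 hρ'B)

end Smoothing

/-- Smoothing bound for the max-relative entropy. -/
theorem dMaxSmooth_smoothing_bound {d : ℕ} (ρ σ : Matrix (Fin d) (Fin d) ℂ)
    (hρ : IsState ρ) (hσ : IsState σ) (lam : ℝ) (hlam : (lam : EReal) ≤ dMax ρ σ)
    (ε : ℝ) (hε : ε = rtr (mposPart (ρ - (((2:ℝ) ^ lam : ℝ) : ℂ) • σ))) :
    dMaxSmooth (Real.sqrt ε) ρ σ ≤ (lam : EReal) - elog (1 - ε) :=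
  dMaxSmooth_smoothing_bound_general hρ hσ.1 lam ε hε

end QCD
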